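/- Let W: ℝ^d → ℝ ∪ {∞} be even, locally integrable, bounded below on compact sets, lower semicontinuous, continuous on ℝ^d∖{0} with W(0) = lim_{x→0} W(x), and suppose that for any R > 0 there are constants C_1(R), C_2(R) such that the average of W over any ball B(x;ε) with |x| < R, 0 < ε < 1 is at most C_1(R) + C_2(R) W(x). Let μ be a compactly supported signed measure with E[|μ|] < ∞, and let φ_ε be a standard radially decreasing mollifier supported in B(0;ε). Then lim_{ε→0} E[μ * φ_ε] = E[μ]. -/

import Mathlib

open MeasureTheory Real Filter Topology Metric Set
open scoped ENNReal

noncomputable section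
open Classical

def erealToENNReal (x : EReal) : ℝ≥0∞ :=
  if x = ⊤ then ⊤ else ENNReal.ofReal x.toReal

def ennrealToEReal (x : ℝ≥0∞) : EReal :=
  if x = ⊤ then ⊤ else ((x.toReal : ℝ) : EReal)

/-- The interaction energy of a (nonnegative) measure, valued in the extended reals. -/
def interactionEnergy {d : ℕ} (W : EuclideanSpace ℝ (Fin d) → EReal)
    (ρ : Measure (EuclideanSpace ℝ (Fin d))) : EReal :=
  (((2:ℝ)⁻¹ : ℝ) : EReal) *
    (ennrealToEReal (∫⁻ p, erealToENNReal (W (p.1 - p.2)) ∂(ρ.prod ρ))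
      - ennrealToEReal (∫⁻ p, erealToENNReal (-(W (p.1 - p.2))) ∂(ρ.prod ρ)))

/-- The interaction energy of a signed measure `μ` (expressed through its Jordan
decomposition `μ = μ⁺ - μ⁻`), as a real number:
`E[μ] = (1/2)(∬ W d(μ⁺×μ⁺) + ∬ W d(μ⁻×μ⁻) - 2∬ W d(μ⁺×μ⁻))`. -/
def signedEnergy {d : ℕ} (W : EuclideanSpace ℝ (Fin d) → EReal)
    (μ : SignedMeasure (EuclideanSpace ℝ (Fin d))) : ℝ :=
  (2:ℝ)⁻¹ *
    ((∫ p, (W (p.1 - p.2)).toReal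
        ∂((μ.toJordanDecomposition.posPart).prod (μ.toJordanDecomposition.posPart)))
      + (∫ p, (W (p.1 - p.2)).toReal
        ∂((μ.toJordanDecomposition.negPart).prod (μ.toJordanDecomposition.negPart)))
      - 2 * ∫ p, (W (p.1 - p.2)).toReal
        ∂((μ.toJordanDecomposition.posPart).prod (μ.toJordanDecomposition.negPart)))

/-- The interaction energy `(1/2)∬ W(x-y) f(x) f(y) dx dy` of a density `f`. -/
def densityEnergy {d : ℕ} (W : EuclideanSpace ℝ (Fin d) → EReal)
    (f : EuclideanSpace ℝ (Fin d) → ℝ) : ℝ :=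
  (2:ℝ)⁻¹ * ∫ p : EuclideanSpace ℝ (Fin d) × EuclideanSpace ℝ (Fin d),
    (W (p.1 - p.2)).toReal * f p.1 * f p.2

/-- The mollification `μ * φ_ε` of the signed measure `μ`, where
`φ_ε(x) = ε^{-d} φ(x/ε)`, as a function on `ℝ^d`. -/
def mollifiedSigned {d : ℕ} (φ : EuclideanSpace ℝ (Fin d) → ℝ)
    (μ : SignedMeasure (EuclideanSpace ℝ (Fin d))) (ε : ℝ)
    (x : EuclideanSpace ℝ (Fin d)) : ℝ :=
  (∫ y, ε ^ (-(d:ℝ)) * φ (ε⁻¹ • (x - y)) ∂μ.toJordanDecomposition.posPart)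
    - ∫ y, ε ^ (-(d:ℝ)) * φ (ε⁻¹ • (x - y)) ∂μ.toJordanDecomposition.negPart

/-!
For finite measures `α`, `β` the mutual energy of `α * φ_ε` and `β * φ_ε` equals, by Fubini and the
substitution `x ↦ a + εx`, `y ↦ b + εy`, the integral over `α × β` of
`W_ε(a - b) = ∬ W(a - b + ε(x - y)) φ(x) φ(y) dx dy`.
Where `W` is finite it is continuous, so `W_ε → W` there. The shear `(x, y) ↦ (x - y, y)` bounds
`|W_ε(z)|` by a multiple of the average of `|W|` over a ball around `z` of radius comparable to `ε`,
hence, by the averaging hypothesis and the lower bound on `W`, by `A + B|W(z)|` uniformly in `ε`.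
Finiteness of `E[|μ|]` makes this an integrable majorant, and dominated convergence applies to each
of the four terms of the expansion of `E[(μ⁺ - μ⁻) * φ_ε]`.
-/

open scoped Pointwise

section Shear

variable {G : Type*} [AddGroup G]

lemma prod_subset_preimage_sub_prod (K L : Set G) :
    K ×ˢ L ⊆ (fun p : G × G => (p.1 - p.2, p.2)) ⁻¹' ((K - L) ×ˢ L) :=
  fun _ hp => ⟨sub_mem_sub hp.1 hp.2, hp.2⟩

variable [MeasurableSpace G] [MeasurableAdd₂ G] [MeasurableNeg G]

lemma measurableEmbedding_sub_prod :
    MeasurableEmbedding (fun p : G × G => (p.1 - p.2, p.2)) := by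
  have hsurj : Function.Surjective (fun p : G × G => (p.1 - p.2, p.2)) :=
    fun p => ⟨(p.1 + p.2, p.2), by simp⟩
  exact .of_measurable_inverse (g := fun p : G × G => (p.1 + p.2, p.2)) (by fun_prop)
    (hsurj.range_eq ▸ .univ) (by fun_prop) fun p => by simp

variable {μ ν : Measure G} [SFinite μ] [SFinite ν] [μ.IsAddRightInvariant] {w : G → ℝ} {K L : Set G}

lemma integrableOn_preimage_comp_sub (hL : ν L ≠ ∞)
    (hw : IntegrableOn w (K - L) μ) :
    IntegrableOn (fun p : G × G => w (p.1 - p.2))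
      ((fun p : G × G => (p.1 - p.2, p.2)) ⁻¹' ((K - L) ×ˢ L)) (μ.prod ν) := by
  have : IsFiniteMeasure (ν.restrict L) := ⟨by simpa using hL.lt_top⟩
  have hfst : IntegrableOn (fun p : G × G => w p.1) ((K - L) ×ˢ L) (μ.prod ν) := by
    rw [IntegrableOn, ← Measure.prod_restrict]
    exact Integrable.comp_fst hw _
  exact ((measurePreserving_sub_prod μ ν).integrableOn_comp_preimage
    measurableEmbedding_sub_prod).2 hfst

lemma integrableOn_comp_sub (hL : ν L ≠ ∞) (hw : IntegrableOn w (K - L) μ) :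
    IntegrableOn (fun p : G × G => w (p.1 - p.2)) (K ×ˢ L) (μ.prod ν) :=
  (integrableOn_preimage_comp_sub hL hw).mono_set (prod_subset_preimage_sub_prod K L)

lemma setIntegral_abs_comp_sub_le (hL : ν L ≠ ∞) (hw : IntegrableOn w (K - L) μ) :
    ∫ p in K ×ˢ L, |w (p.1 - p.2)| ∂(μ.prod ν) ≤ (∫ s in K - L, |w s| ∂μ) * ν.real L := by
  calc ∫ p in K ×ˢ L, |w (p.1 - p.2)| ∂(μ.prod ν)
      ≤ ∫ p in (fun p : G × G => (p.1 - p.2, p.2)) ⁻¹' ((K - L) ×ˢ L),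
          |w (p.1 - p.2)| ∂(μ.prod ν) :=
        setIntegral_mono_set (integrableOn_preimage_comp_sub hL hw).abs
          (Eventually.of_forall fun _ => abs_nonneg _)
          (prod_subset_preimage_sub_prod K L).eventuallyLE
    _ = ∫ p in (K - L) ×ˢ L, |w p.1| * 1 ∂(μ.prod ν) := by
        simpa only [mul_one] using (measurePreserving_sub_prod μ ν).setIntegral_preimage_emb
          measurableEmbedding_sub_prod (fun p => |w p.1|) ((K - L) ×ˢ L)
    _ = (∫ s in K - L, |w s| ∂μ) * ν.real L := by
        rw [setIntegral_prod_mul (fun s => |w s|) (fun _ => (1 : ℝ)) (K - L) L]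
        simp

end Shear

section Kernels

variable {E : Type*} [NormedAddCommGroup E]

lemma isCompact_sub {K L : Set E} (hK : IsCompact K) (hL : IsCompact L) : IsCompact (K - L) := by
  rw [sub_eq_add_neg]
  exact hK.add hL.neg

lemma indicator_ball_comp_add_smul [NormedSpace ℝ E] (f : E → ℝ) (z : E) {ε : ℝ} (hε : 0 < ε)
    (R : ℝ) :
    (ball (0 : E) R).indicator (fun s => f (z + ε • s)) =
      fun s => (ball z (ε * R)).indicator f (z + ε • s) := by
  have hpre : (fun s => z + ε • s) ⁻¹' ball z (ε * R) = ball (0 : E) R := by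
    ext s
    simp [norm_smul, abs_of_pos hε, hε]
  rw [← hpre]
  exact funext fun s => indicator_comp_right (g := f) fun s => z + ε • s

variable [MeasurableSpace E] {w φ ψ : E → ℝ}

/-- The weights allowed for mollification: bounded Borel functions of compact support, of any
sign. -/
structure IsBoundedKernel (φ : E → ℝ) : Prop where
  measurable : Measurable φ
  hasCompactSupport : HasCompactSupport φ
  exists_bound : ∃ M, ∀ x, |φ x| ≤ M

lemma IsBoundedKernel.of_continuous [OpensMeasurableSpace E] (hφ : Continuous φ)
    (hc : HasCompactSupport φ) : IsBoundedKernel φ :=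
  ⟨hφ.measurable, hc, hc.exists_bound_of_continuous hφ⟩

lemma IsBoundedKernel.integrable (hφ : IsBoundedKernel φ) (μ : Measure E)
    [OpensMeasurableSpace E] [IsFiniteMeasureOnCompacts μ] : Integrable φ μ := by
  obtain ⟨M, hM⟩ := hφ.exists_bound
  rw [← integrableOn_iff_integrable_of_support_subset (subset_tsupport φ)]
  exact Measure.integrableOn_of_bounded hφ.hasCompactSupport.measure_lt_top.ne
    hφ.measurable.aestronglyMeasurable (Eventually.of_forall hM)

/-- The density of the convolution `α * ψ` of a measure with a kernel. -/
def convDensity (ψ : E → ℝ) (α : Measure E) (x : E) : ℝ :=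
  ∫ a, ψ (x - a) ∂α

/-- The mutual interaction `∬ w(x - y) f(x) g(y) dx dy` of two densities. -/
def crossEnergy (w : E → ℝ) (μ : Measure E) (f g : E → ℝ) : ℝ :=
  ∫ p : E × E, w (p.1 - p.2) * (f p.1 * g p.2) ∂(μ.prod μ)

lemma mul_convDensity_mul_convDensity {α β : Measure E} [SFinite α] [SFinite β]
    (w ψ : E → ℝ) (p : E × E) :
    w (p.1 - p.2) * (convDensity ψ α p.1 * convDensity ψ β p.2) =
      ∫ q, w (p.1 - p.2) * (ψ (p.1 - q.1) * ψ (p.2 - q.2)) ∂(α.prod β) := by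
  rw [integral_const_mul, integral_prod_mul (fun a => ψ (p.1 - a)) (fun b => ψ (p.2 - b)),
    convDensity, convDensity]

variable [NormedSpace ℝ E]

/-- The dilated kernel `φ_ε(x) = ε^{-n} φ(x/ε)` with `n = dim E`. -/
def dilateKernel (φ : E → ℝ) (ε : ℝ) (x : E) : ℝ :=
  ε ^ (-(Module.finrank ℝ E : ℝ)) * φ (ε⁻¹ • x)

/-- The interaction potential averaged at scale `ε` around each of two particles whose difference
is `z`. -/
def doubleAverage (w φ : E → ℝ) (μ : Measure E) (ε : ℝ) (z : E) : ℝ :=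
  ∫ p : E × E, w (z + ε • (p.1 - p.2)) * (φ p.1 * φ p.2) ∂(μ.prod μ)

variable [BorelSpace E]

lemma IsBoundedKernel.dilateKernel (hφ : IsBoundedKernel φ) {ε : ℝ} (hε : ε ≠ 0) :
    IsBoundedKernel (dilateKernel φ ε) where
  measurable := (hφ.measurable.comp (measurable_const_smul ε⁻¹)).const_mul _
  hasCompactSupport := (hφ.hasCompactSupport.comp_smul (inv_ne_zero hε)).mul_left
  exists_bound := by
    obtain ⟨M, hM⟩ := hφ.exists_bound
    refine ⟨|ε ^ (-(Module.finrank ℝ E : ℝ))| * M, fun x => ?_⟩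
    rw [_root_.dilateKernel, abs_mul]
    exact mul_le_mul_of_nonneg_left (hM _) (abs_nonneg _)

variable [FiniteDimensional ℝ E] {μ : Measure E} [μ.IsAddHaarMeasure]

lemma integrableOn_ball_comp_add_smul {z : E} {ε R : ℝ} (hε : 0 < ε)
    (hw : IntegrableOn w (ball z (ε * R)) μ) :
    IntegrableOn (fun s => w (z + ε • s)) (ball 0 R) μ := by
  rw [← integrable_indicator_iff measurableSet_ball] at hw ⊢
  rw [indicator_ball_comp_add_smul w z hε]
  exact (hw.comp_add_left z).comp_smul hε.ne'

lemma setAverage_ball_comp_add_smul (f : E → ℝ) (z : E) {ε R : ℝ} (hε : 0 < ε) :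
    ⨍ s in ball 0 R, f (z + ε • s) ∂μ = ⨍ y in ball z (ε * R), f y ∂μ := by
  have hint : ∫ s in ball 0 R, f (z + ε • s) ∂μ =
      (ε ^ Module.finrank ℝ E)⁻¹ * ∫ y in ball z (ε * R), f y ∂μ := by
    rw [← integral_indicator measurableSet_ball, ← integral_indicator measurableSet_ball,
      indicator_ball_comp_add_smul f z hε,
      Measure.integral_comp_smul_of_nonneg μ (fun s => (ball z (ε * R)).indicator f (z + s)) ε
      (hR := hε.le), integral_add_left_eq_self, smul_eq_mul]
  have hvol : μ.real (ball z (ε * R)) = ε ^ Module.finrank ℝ E * μ.real (ball 0 R) := by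
    rw [measureReal_def, Measure.addHaar_ball_mul_of_pos μ z hε, ENNReal.toReal_mul,
      ENNReal.toReal_ofReal (by positivity), measureReal_def]
  rw [setAverage_eq, setAverage_eq, hint, hvol, smul_eq_mul, smul_eq_mul, mul_inv]
  ring

lemma exists_abs_doubleAverage_le (hφ : IsBoundedKernel φ) (hloc : LocallyIntegrable w μ) :
    ∃ C R : ℝ, 0 ≤ C ∧ 0 < R ∧ ∀ ε, 0 < ε → ∀ z,
      |doubleAverage w φ μ ε z| ≤ C * ⨍ y in ball z (ε * R), |w y| ∂μ := by
  obtain ⟨M, hM⟩ := hφ.exists_bound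
  set K := tsupport φ
  have hK : IsCompact K := hφ.hasCompactSupport
  obtain ⟨R, hR, hKR⟩ : ∃ R, 0 < R ∧ K - K ⊆ ball 0 R :=
    (isCompact_sub hK hK).isBounded.subset_ball_lt 0 0
  refine ⟨M ^ 2 * μ.real K * μ.real (ball 0 R), R, by positivity, hR, fun ε hε z => ?_⟩
  have hball : IntegrableOn (fun s => w (z + ε • s)) (ball 0 R) μ :=
    integrableOn_ball_comp_add_smul hε <|
      (hloc.integrableOn_isCompact (isCompact_closedBall z (ε * R))).mono_set ball_subset_closedBall
  have hKK := integrableOn_comp_sub (ν := μ) hK.measure_lt_top.ne (hball.mono_set hKR)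
  have hsupp : ∀ p ∉ K ×ˢ K, φ p.1 * φ p.2 = 0 := fun p hp => by
    rcases not_and_or.1 hp with h | h <;> simp [image_eq_zero_of_notMem_tsupport h]
  have hφM : ∀ p : E × E, |φ p.1 * φ p.2| ≤ M ^ 2 := fun p => by
    rw [abs_mul, sq]
    exact mul_le_mul (hM _) (hM _) (abs_nonneg _) ((abs_nonneg _).trans (hM p.1))
  calc |doubleAverage w φ μ ε z|
      = |∫ p in K ×ˢ K, w (z + ε • (p.1 - p.2)) * (φ p.1 * φ p.2) ∂(μ.prod μ)| := by
        rw [doubleAverage, setIntegral_eq_integral_of_forall_compl_eq_zero]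
        exact fun p hp => by rw [hsupp p hp, mul_zero]
    _ ≤ ∫ p in K ×ˢ K, |w (z + ε • (p.1 - p.2))| * M ^ 2 ∂(μ.prod μ) := by
        rw [← Real.norm_eq_abs]
        refine norm_integral_le_of_norm_le (hKK.abs.mul_const _) (Eventually.of_forall fun p => ?_)
        rw [Real.norm_eq_abs, abs_mul]
        exact mul_le_mul_of_nonneg_left (hφM p) (abs_nonneg _)
    _ ≤ ((∫ s in K - K, |w (z + ε • s)| ∂μ) * μ.real K) * M ^ 2 := by
        rw [integral_mul_const]
        gcongr
        exact setIntegral_abs_comp_sub_le hK.measure_lt_top.ne (hball.mono_set hKR)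
    _ ≤ ((∫ s in ball 0 R, |w (z + ε • s)| ∂μ) * μ.real K) * M ^ 2 := by
        gcongr
        · exact Eventually.of_forall fun _ => abs_nonneg _
        · exact hball.abs
    _ = M ^ 2 * μ.real K * μ.real (ball 0 R) * ⨍ y in ball z (ε * R), |w y| ∂μ := by
        rw [← setAverage_ball_comp_add_smul (fun y => |w y|) z hε,
          ← measure_smul_setAverage _ measure_ball_lt_top.ne, smul_eq_mul]
        ring

lemma tendsto_doubleAverage (hφ : IsBoundedKernel φ) (hφ1 : ∫ x, φ x ∂μ = 1) (hw : Measurable w)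
    {z : E} (hz : ContinuousAt w z) :
    Tendsto (fun ε => doubleAverage w φ μ ε z) (𝓝 0) (𝓝 (w z)) := by
  have hone : ∫ p : E × E, φ p.1 * φ p.2 ∂(μ.prod μ) = 1 := by
    rw [integral_prod_mul, hφ1, one_mul]
  have hφφ : Integrable (fun p : E × E => φ p.1 * φ p.2) (μ.prod μ) :=
    (hφ.integrable μ).mul_prod (hφ.integrable μ)
  have hlim (s : E) : Tendsto (fun ε : ℝ => z + ε • s) (𝓝 0) (𝓝 z) :=
    Continuous.tendsto' (by fun_prop) _ _ (by simp)
  obtain ⟨R, hKR⟩ : ∃ R, tsupport φ - tsupport φ ⊆ ball 0 R :=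
    (isCompact_sub hφ.hasCompactSupport hφ.hasCompactSupport).isBounded.subset_ball 0
  obtain ⟨η, hη, hbound⟩ : ∃ η > 0, ∀ y, dist y z < η → |w y| < |w z| + 1 :=
    Metric.eventually_nhds_iff.1 (hz.abs.eventually_lt_const (lt_add_one _))
  have hsmall : ∀ᶠ ε : ℝ in 𝓝 0, |ε| * R < η :=
    (Continuous.tendsto' (by fun_prop) _ _ (by simp)).eventually_lt_const hη
  rw [← mul_one (w z), ← hone, ← integral_const_mul]
  refine tendsto_integral_filter_of_dominated_convergence
    (fun p => (|w z| + 1) * |φ p.1 * φ p.2|) (Eventually.of_forall fun ε => ?_) ?_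
    (hφφ.abs.const_mul _) (Eventually.of_forall fun p => ?_)
  · exact ((hw.comp (by fun_prop)).mul ((hφ.measurable.comp measurable_fst).mul
      (hφ.measurable.comp measurable_snd))).aestronglyMeasurable
  · filter_upwards [hsmall] with ε hε
    refine Eventually.of_forall fun p => ?_
    by_cases hp : φ p.1 * φ p.2 = 0
    · simp [hp]
    have hpR : p.1 - p.2 ∈ ball 0 R := hKR <| sub_mem_sub
      (subset_tsupport φ (left_ne_zero_of_mul hp)) (subset_tsupport φ (right_ne_zero_of_mul hp))
    have hdist : dist (z + ε • (p.1 - p.2)) z < η := by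
      rw [dist_self_add_left, norm_smul, Real.norm_eq_abs]
      exact (mul_le_mul_of_nonneg_left (mem_ball_zero_iff.1 hpR).le (abs_nonneg ε)).trans_lt hε
    rw [Real.norm_eq_abs, abs_mul]
    exact mul_le_mul_of_nonneg_right (hbound _ hdist).le (abs_nonneg _)
  · exact (hz.tendsto.comp (hlim _)).mul_const _

lemma measurable_doubleAverage (hw : Measurable w) (hφ : IsBoundedKernel φ) (ε : ℝ) :
    Measurable (doubleAverage w φ μ ε) := by
  have hφm := hφ.measurable
  have : Measurable fun q : E × (E × E) =>
      w (q.1 + ε • (q.2.1 - q.2.2)) * (φ q.2.1 * φ q.2.2) := by fun_prop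
  exact this.stronglyMeasurable.integral_prod_right.measurable

lemma tendsto_integral_doubleAverage {Ω : Type*} [MeasurableSpace Ω] {ρ : Measure Ω}
    [IsFiniteMeasure ρ] {Z : Ω → E} (hZ : Measurable Z) (hφ : IsBoundedKernel φ)
    (hφ1 : ∫ x, φ x ∂μ = 1) (hw : Measurable w) (hloc : LocallyIntegrable w μ)
    (hcont : ∀ᵐ q ∂ρ, ContinuousAt w (Z q)) (hint : Integrable (fun q => w (Z q)) ρ) {A B : ℝ}
    (havg : ∀ᵐ q ∂ρ, ∀ r, 0 < r → r < 1 → ⨍ y in ball (Z q) r, |w y| ∂μ ≤ A + B * |w (Z q)|) :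
    Tendsto (fun ε => ∫ q, doubleAverage w φ μ ε (Z q) ∂ρ) (𝓝[>] 0) (𝓝 (∫ q, w (Z q) ∂ρ)) := by
  obtain ⟨C, R, hC, hR, hCR⟩ := exists_abs_doubleAverage_le hφ hloc
  have hsmall : ∀ᶠ ε : ℝ in 𝓝[>] 0, ε * R < 1 := nhdsWithin_le_nhds <|
    (Continuous.tendsto' (continuous_mul_const R) 0 0 (zero_mul R)).eventually_lt_const one_pos
  refine tendsto_integral_filter_of_dominated_convergence
    (fun q => C * (A + B * |w (Z q)|)) (Eventually.of_forall fun ε => ?_) ?_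
    (((integrable_const A).add (hint.abs.const_mul B)).const_mul C) ?_
  · exact ((measurable_doubleAverage hw hφ ε).comp hZ).aestronglyMeasurable
  · filter_upwards [hsmall, self_mem_nhdsWithin] with ε hεR hε
    filter_upwards [havg] with q hq
    exact (hCR ε hε (Z q)).trans
      (mul_le_mul_of_nonneg_left (hq _ (mul_pos hε hR) hεR) hC)
  · filter_upwards [hcont] with q hq
    exact (tendsto_doubleAverage hφ hφ1 hw hq).mono_left nhdsWithin_le_nhds

lemma integral_comp_sub_mul_dilateKernel (w φ : E → ℝ) {ε : ℝ} (hε : 0 < ε) (q : E × E) :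
    ∫ p : E × E, w (p.1 - p.2) * (dilateKernel φ ε (p.1 - q.1) * dilateKernel φ ε (p.2 - q.2))
      ∂(μ.prod μ) = doubleAverage w φ μ ε (q.1 - q.2) := by
  set n := Module.finrank ℝ E with hn
  set F : E × E → ℝ := fun p => w (q.1 - q.2 + ε • (p.1 - p.2)) * (φ p.1 * φ p.2)
  have hF (p : E × E) :
      w (p.1 - p.2) * (dilateKernel φ ε (p.1 - q.1) * dilateKernel φ ε (p.2 - q.2)) =
        (ε ^ (n + n))⁻¹ * F (ε⁻¹ • (p - q)) := by
    have harg : q.1 - q.2 + ε • (ε⁻¹ • (p.1 - q.1) - ε⁻¹ • (p.2 - q.2)) = p.1 - p.2 := by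
      rw [← smul_sub, smul_inv_smul₀ hε.ne']
      abel
    simp only [F, dilateKernel, Prod.smul_fst, Prod.smul_snd, Prod.fst_sub, Prod.snd_sub, harg,
      Real.rpow_neg hε.le, Real.rpow_natCast, ← hn, pow_add, mul_inv]
    ring
  simp_rw [hF]
  rw [integral_const_mul, integral_sub_right_eq_self (fun p => F (ε⁻¹ • p)) q,
    Measure.integral_comp_inv_smul_of_nonneg _ _ hε.le, Module.finrank_prod, smul_eq_mul,
    inv_mul_cancel_left₀ (pow_pos hε _).ne', doubleAverage]

section Fubini

variable {α β : Measure E} [IsFiniteMeasure α] [IsFiniteMeasure β] {K : Set E}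

lemma integrable_comp_sub_mul_kernel (hψ : IsBoundedKernel ψ) (hloc : LocallyIntegrable w μ)
    (hK : IsCompact K) (hα : ∀ᵐ a ∂α, a ∈ K) (hβ : ∀ᵐ b ∂β, b ∈ K) :
    Integrable (fun s : (E × E) × (E × E) =>
      w (s.1.1 - s.1.2) * (ψ (s.1.1 - s.2.1) * ψ (s.1.2 - s.2.2)))
      ((μ.prod μ).prod (α.prod β)) := by
  obtain ⟨M, hM⟩ := hψ.exists_bound
  have hψm := hψ.measurable
  have hS : IsCompact (tsupport ψ + K) := IsCompact.add hψ.hasCompactSupport hK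
  have hw : Integrable (((tsupport ψ + K) ×ˢ (tsupport ψ + K)).indicator
      fun p : E × E => w (p.1 - p.2)) (μ.prod μ) :=
    (integrable_indicator_iff (hS.prod hS).measurableSet).2 <|
      integrableOn_comp_sub hS.measure_lt_top.ne (hloc.integrableOn_isCompact (isCompact_sub hS hS))
  refine ((hw.comp_fst (α.prod β)).mul_bdd (c := M * M)
    (g := fun s => ψ (s.1.1 - s.2.1) * ψ (s.1.2 - s.2.2)) ?_ ?_).congr ?_
  · exact Measurable.aestronglyMeasurable (by fun_prop)
  · refine Eventually.of_forall fun s => ?_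
    rw [norm_mul]
    exact mul_le_mul (hM _) (hM _) (norm_nonneg _) ((abs_nonneg _).trans (hM 0))
  · have hαβ : ∀ᵐ s ∂(μ.prod μ).prod (α.prod β), s.2.1 ∈ K ∧ s.2.2 ∈ K :=
      Measure.quasiMeasurePreserving_snd.ae <|
        (Measure.quasiMeasurePreserving_fst.ae hα).and (Measure.quasiMeasurePreserving_snd.ae hβ)
    filter_upwards [hαβ] with s hs
    by_cases h0 : ψ (s.1.1 - s.2.1) * ψ (s.1.2 - s.2.2) = 0
    · simp [h0]
    rw [indicator_of_mem]
    exact ⟨mem_add.2 ⟨_, subset_tsupport ψ (left_ne_zero_of_mul h0), _, hs.1, sub_add_cancel _ _⟩,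
      mem_add.2 ⟨_, subset_tsupport ψ (right_ne_zero_of_mul h0), _, hs.2, sub_add_cancel _ _⟩⟩

lemma integrable_comp_sub_mul_convDensity (hψ : IsBoundedKernel ψ)
    (hloc : LocallyIntegrable w μ) (hK : IsCompact K) (hα : ∀ᵐ a ∂α, a ∈ K)
    (hβ : ∀ᵐ b ∂β, b ∈ K) :
    Integrable (fun p : E × E =>
      w (p.1 - p.2) * (convDensity ψ α p.1 * convDensity ψ β p.2)) (μ.prod μ) := by
  simp_rw [mul_convDensity_mul_convDensity]
  exact (integrable_comp_sub_mul_kernel hψ hloc hK hα hβ).integral_prod_left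

lemma crossEnergy_convDensity_dilateKernel (hφ : IsBoundedKernel φ)
    (hloc : LocallyIntegrable w μ) (hK : IsCompact K) (hα : ∀ᵐ a ∂α, a ∈ K)
    (hβ : ∀ᵐ b ∂β, b ∈ K) {ε : ℝ} (hε : 0 < ε) :
    crossEnergy w μ (convDensity (dilateKernel φ ε) α) (convDensity (dilateKernel φ ε) β) =
      ∫ q, doubleAverage w φ μ ε (q.1 - q.2) ∂(α.prod β) := by
  simp_rw [crossEnergy, mul_convDensity_mul_convDensity,
    ← integral_comp_sub_mul_dilateKernel w φ hε]
  exact integral_integral_swap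
    (integrable_comp_sub_mul_kernel (hφ.dilateKernel hε.ne') hloc hK hα hβ)

lemma tendsto_crossEnergy_convDensity (hφ : IsBoundedKernel φ) (hφ1 : ∫ x, φ x ∂μ = 1)
    (hw : Measurable w) (hloc : LocallyIntegrable w μ) (hK : IsCompact K)
    (hα : ∀ᵐ a ∂α, a ∈ K) (hβ : ∀ᵐ b ∂β, b ∈ K)
    (hcont : ∀ᵐ q ∂(α.prod β), ContinuousAt w (q.1 - q.2))
    (hint : Integrable (fun q : E × E => w (q.1 - q.2)) (α.prod β)) {A B : ℝ}
    (havg : ∀ᵐ q ∂(α.prod β), ∀ r, 0 < r → r < 1 →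
      ⨍ y in ball (q.1 - q.2) r, |w y| ∂μ ≤ A + B * |w (q.1 - q.2)|) :
    Tendsto (fun ε => crossEnergy w μ (convDensity (dilateKernel φ ε) α)
      (convDensity (dilateKernel φ ε) β)) (𝓝[>] 0) (𝓝 (∫ q, w (q.1 - q.2) ∂(α.prod β))) := by
  refine (tendsto_integral_doubleAverage (measurable_fst.sub measurable_snd) hφ hφ1 hw hloc hcont
    hint havg).congr' ?_
  filter_upwards [self_mem_nhdsWithin] with ε hε
  exact (crossEnergy_convDensity_dilateKernel hφ hloc hK hα hβ hε).symm

end Fubini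

end Kernels

section EReal

lemma erealToENNReal_eq_toENNReal : erealToENNReal = EReal.toENNReal := rfl

lemma enorm_toReal_le_toENNReal_add (x : EReal) :
    ‖x.toReal‖ₑ ≤ x.toENNReal + (-x).toENNReal := by
  induction x with
  | bot => simp
  | top => simp
  | coe x =>
    rw [← EReal.coe_neg, EReal.toReal_coe, EReal.real_coe_toENNReal, EReal.real_coe_toENNReal,
      Real.enorm_eq_ofReal_abs]
    rcases le_total 0 x with hx | hx
    · rw [abs_of_nonneg hx]
      exact le_self_add
    · rw [abs_of_nonpos hx]
      exact le_add_self

variable {Ω : Type*} [MeasurableSpace Ω] {ρ : Measure Ω} {f : Ω → EReal}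

lemma integrable_toReal_of_lintegral_toENNReal_ne_top (hf : Measurable f)
    (hpos : ∫⁻ x, (f x).toENNReal ∂ρ ≠ ∞) (hneg : ∫⁻ x, (-f x).toENNReal ∂ρ ≠ ∞) :
    Integrable (fun x => (f x).toReal) ρ := by
  refine ⟨(measurable_ereal_toReal.comp hf).aestronglyMeasurable, ?_⟩
  calc ∫⁻ x, ‖(f x).toReal‖ₑ ∂ρ
      ≤ ∫⁻ x, ((f x).toENNReal + (-f x).toENNReal) ∂ρ :=
        lintegral_mono fun x => enorm_toReal_le_toENNReal_add (f x)
    _ = ∫⁻ x, (f x).toENNReal ∂ρ + ∫⁻ x, (-f x).toENNReal ∂ρ :=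
        lintegral_add_left (measurable_ereal_toENNReal.comp hf) _
    _ < ∞ := ENNReal.add_lt_top.2 ⟨hpos.lt_top, hneg.lt_top⟩

lemma ae_ne_top_of_lintegral_toENNReal_ne_top (hf : Measurable f)
    (hpos : ∫⁻ x, (f x).toENNReal ∂ρ ≠ ∞) : ∀ᵐ x ∂ρ, f x ≠ ⊤ := by
  filter_upwards [ae_lt_top (measurable_ereal_toENNReal.comp hf) hpos] with x hx
  exact EReal.toENNReal_ne_top_iff.1 hx.ne

lemma lintegral_toENNReal_neg_ne_top [IsFiniteMeasure ρ] {m : ℝ}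
    (hm : ∀ᵐ x ∂ρ, (m : EReal) ≤ f x) : ∫⁻ x, (-f x).toENNReal ∂ρ ≠ ∞ := by
  refine ne_top_of_le_ne_top (b := ∫⁻ _, (-m : EReal).toENNReal ∂ρ) ?_ (lintegral_mono_ae ?_)
  · rw [lintegral_const, ← EReal.coe_neg, EReal.real_coe_toENNReal]
    exact ENNReal.mul_ne_top ENNReal.ofReal_ne_top (measure_ne_top ρ univ)
  · filter_upwards [hm] with x hx
    exact EReal.toENNReal_le_toENNReal (EReal.neg_le_neg_iff.2 hx)

lemma lintegral_toENNReal_ne_top_of_interactionEnergy_lt_top {d : ℕ}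
    {W : EuclideanSpace ℝ (Fin d) → EReal} {ρ : Measure (EuclideanSpace ℝ (Fin d))}
    (hneg : ∫⁻ p, (-W (p.1 - p.2)).toENNReal ∂(ρ.prod ρ) ≠ ∞) (hE : interactionEnergy W ρ < ⊤) :
    ∫⁻ p, (W (p.1 - p.2)).toENNReal ∂(ρ.prod ρ) ≠ ∞ := by
  intro hpos
  rw [interactionEnergy, erealToENNReal_eq_toENNReal, hpos, ennrealToEReal, ennrealToEReal,
    if_pos rfl, if_neg hneg, EReal.top_sub_coe, EReal.coe_mul_top_of_pos (by norm_num)] at hE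
  exact hE.ne rfl

lemma average_abs_le_average_add [IsFiniteMeasure ρ] {g : Ω → ℝ} (hg : Integrable g ρ) {m : ℝ}
    (hm0 : 0 ≤ m) (hm : ∀ᵐ x ∂ρ, -m ≤ g x) : ⨍ x, |g x| ∂ρ ≤ ⨍ x, g x ∂ρ + 2 * m := by
  have hint : ∫ x, |g x| ∂ρ ≤ ∫ x, g x ∂ρ + ρ.real univ * (2 * m) := by
    rw [← smul_eq_mul, ← integral_const, ← integral_add hg (integrable_const _)]
    refine integral_mono_ae hg.abs (hg.add (integrable_const _)) ?_
    filter_upwards [hm] with x hx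
    exact abs_le'.2 ⟨by linarith, by linarith⟩
  rw [average_eq, average_eq, smul_eq_mul, smul_eq_mul]
  calc (ρ.real univ)⁻¹ * ∫ x, |g x| ∂ρ
      ≤ (ρ.real univ)⁻¹ * (∫ x, g x ∂ρ + ρ.real univ * (2 * m)) := by gcongr
    _ = (ρ.real univ)⁻¹ * ∫ x, g x ∂ρ + (ρ.real univ)⁻¹ * ρ.real univ * (2 * m) := by ring
    _ ≤ (ρ.real univ)⁻¹ * ∫ x, g x ∂ρ + 2 * m := by
        gcongr _ + ?_
        exact mul_le_of_le_one_left (by positivity) inv_mul_le_one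

lemma average_abs_toReal_le [IsFiniteMeasure ρ] (hf : Integrable (fun x => (f x).toReal) ρ)
    {m : ℝ} (hm : ∀ᵐ x ∂ρ, (m : EReal) ≤ f x) {C₁ C₂ : ℝ} {a : EReal} (ha : a ≠ ⊤) (ha' : a ≠ ⊥)
    (havg : ((⨍ x, (f x).toReal ∂ρ : ℝ) : EReal) ≤ C₁ + C₂ * a) :
    ⨍ x, |(f x).toReal| ∂ρ ≤ |C₁| + 2 * |m| + |C₂| * |a.toReal| := by
  have hlower : ∀ᵐ x ∂ρ, -|m| ≤ (f x).toReal := by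
    filter_upwards [hm] with x hx
    by_cases htop : f x = ⊤
    · simp [htop]
    · exact (neg_abs_le m).trans (EReal.toReal_le_toReal hx (EReal.coe_ne_bot m) htop)
  lift a to ℝ using ⟨ha, ha'⟩
  have havg' : ⨍ x, (f x).toReal ∂ρ ≤ C₁ + C₂ * a := mod_cast havg
  have hC : C₁ + C₂ * a ≤ |C₁| + |C₂| * |a| :=
    abs_mul C₂ a ▸ add_le_add (le_abs_self C₁) (le_abs_self _)
  rw [EReal.toReal_coe]
  linarith [average_abs_le_average_add hf (abs_nonneg m) hlower]

end EReal

section Potentials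

lemma continuous_of_continuousOn_compl_singleton {X Y : Type*} [TopologicalSpace X] [T1Space X]
    [TopologicalSpace Y] {f : X → Y} {a : X} (hf : ContinuousOn f {a}ᶜ)
    (ha : Tendsto f (𝓝[≠] a) (𝓝 (f a))) : Continuous f := by
  refine continuous_iff_continuousAt.2 fun x => ?_
  rcases eq_or_ne x a with rfl | hx
  · exact continuousWithinAt_compl_self.1 ha
  · exact hf.continuousAt (isOpen_compl_singleton.mem_nhds hx)

/-- An admissible interaction potential: the assumptions (W0-w) and (W1). In the integrals over
`E` the value `∞` is read as `0`, the value of `EReal.toReal` there. -/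
structure IsAdmissiblePotential {E : Type*} [NormedAddCommGroup E] [MeasurableSpace E]
    (W : E → EReal) (μ : Measure E) : Prop where
  even : ∀ x, W (-x) = W x
  continuous : Continuous W
  locallyIntegrable : LocallyIntegrable (fun x => (W x).toReal) μ
  bddBelow : ∀ K : Set E, IsCompact K → ∃ m : ℝ, ∀ x ∈ K, (m : EReal) ≤ W x
  average_le : ∀ R : ℝ, 0 < R → ∃ C₁ C₂ : ℝ, ∀ x : E, ‖x‖ < R → ∀ ε : ℝ, 0 < ε → ε < 1 →
    ((⨍ y in ball x ε, (W y).toReal ∂μ : ℝ) : EReal) ≤ C₁ + C₂ * W x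

namespace IsAdmissiblePotential

variable {E : Type*} [NormedAddCommGroup E] [MeasurableSpace E] {W : E → EReal} {μ : Measure E}

lemma ne_bot (hW : IsAdmissiblePotential W μ) (x : E) : W x ≠ ⊥ := by
  obtain ⟨m, hm⟩ := hW.bddBelow {x} isCompact_singleton
  exact ((EReal.bot_lt_coe m).trans_le (hm x rfl)).ne'

lemma continuousAt_toReal (hW : IsAdmissiblePotential W μ) {x : E} (hx : W x ≠ ⊤) :
    ContinuousAt (fun x => (W x).toReal) x :=
  (EReal.tendsto_toReal hx (hW.ne_bot x)).comp hW.continuous.continuousAt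

lemma integral_toReal_prod_comm {α β : Measure E} [SFinite α] [SFinite β]
    (hW : IsAdmissiblePotential W μ) :
    ∫ q, (W (q.1 - q.2)).toReal ∂(β.prod α) = ∫ q, (W (q.1 - q.2)).toReal ∂(α.prod β) := by
  have hswap (q : E × E) : W (q.2 - q.1) = W (q.1 - q.2) := by rw [← hW.even, neg_sub]
  rw [← integral_prod_swap]
  simp_rw [Prod.fst_swap, Prod.snd_swap, hswap]

variable [BorelSpace E]

lemma measurable_toReal (hW : IsAdmissiblePotential W μ) : Measurable fun x => (W x).toReal :=
  measurable_ereal_toReal.comp hW.continuous.measurable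

lemma exists_setAverage_abs_toReal_le [ProperSpace E] [IsFiniteMeasureOnCompacts μ]
    (hW : IsAdmissiblePotential W μ) {R : ℝ} (hR : 0 < R) :
    ∃ A B : ℝ, ∀ x, ‖x‖ < R → W x ≠ ⊤ → ∀ r, 0 < r → r < 1 →
      ⨍ y in ball x r, |(W y).toReal| ∂μ ≤ A + B * |(W x).toReal| := by
  obtain ⟨C₁, C₂, hC⟩ := hW.average_le R hR
  obtain ⟨m, hm⟩ := hW.bddBelow (closedBall 0 (R + 1)) (isCompact_closedBall _ _)
  refine ⟨|C₁| + 2 * |m|, |C₂|, fun x hx htop r hr hr1 => ?_⟩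
  have : IsFiniteMeasure (μ.restrict (ball x r)) := ⟨by simpa using measure_ball_lt_top⟩
  have hsub : ball x r ⊆ closedBall 0 (R + 1) :=
    (ball_subset_ball' (by rw [dist_zero_right]; linarith)).trans ball_subset_closedBall
  refine average_abs_toReal_le ?_ ?_ htop (hW.ne_bot x) (hC x hx r hr hr1)
  · exact (hW.locallyIntegrable.integrableOn_isCompact (isCompact_closedBall _ _)).mono_set hsub
  · exact ae_restrict_of_forall_mem measurableSet_ball fun y hy => hm y (hsub hy)

variable [NormedSpace ℝ E] [FiniteDimensional ℝ E] {α β : Measure E} {K : Set E}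

lemma tendsto_crossEnergy_convDensity [IsFiniteMeasure α] [IsFiniteMeasure β] [μ.IsAddHaarMeasure]
    {φ : E → ℝ} (hW : IsAdmissiblePotential W μ) (hφ : IsBoundedKernel φ) (hφ1 : ∫ x, φ x ∂μ = 1)
    (hK : IsCompact K) (hα : ∀ᵐ a ∂α, a ∈ K) (hβ : ∀ᵐ b ∂β, b ∈ K)
    (hint : Integrable (fun q : E × E => (W (q.1 - q.2)).toReal) (α.prod β))
    (hfin : ∀ᵐ q ∂(α.prod β), W (q.1 - q.2) ≠ ⊤) :
    Tendsto (fun ε => crossEnergy (fun x => (W x).toReal) μ (convDensity (dilateKernel φ ε) α)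
      (convDensity (dilateKernel φ ε) β)) (𝓝[>] 0)
      (𝓝 (∫ q, (W (q.1 - q.2)).toReal ∂(α.prod β))) := by
  obtain ⟨R, hR, hKR⟩ : ∃ R, 0 < R ∧ K - K ⊆ ball 0 R :=
    (isCompact_sub hK hK).isBounded.subset_ball_lt 0 0
  have : ProperSpace E := FiniteDimensional.proper_real E
  obtain ⟨A, B, hAB⟩ := hW.exists_setAverage_abs_toReal_le hR
  refine _root_.tendsto_crossEnergy_convDensity (A := A) (B := B) hφ hφ1 hW.measurable_toReal
    hW.locallyIntegrable hK hα hβ (hfin.mono fun q hq => hW.continuousAt_toReal hq) hint ?_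
  filter_upwards [hfin, Measure.quasiMeasurePreserving_fst.ae hα,
    Measure.quasiMeasurePreserving_snd.ae hβ] with q hq h1 h2
  exact hAB _ (mem_ball_zero_iff.1 (hKR (sub_mem_sub h1 h2))) hq

end IsAdmissiblePotential

end Potentials

section SignedEnergy

variable {d : ℕ} {W : EuclideanSpace ℝ (Fin d) → EReal}

lemma mollifiedSigned_eq_sub_convDensity (φ : EuclideanSpace ℝ (Fin d) → ℝ)
    (μ : SignedMeasure (EuclideanSpace ℝ (Fin d))) (ε : ℝ) :
    mollifiedSigned φ μ ε =
      convDensity (dilateKernel φ ε) μ.toJordanDecomposition.posPart -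
        convDensity (dilateKernel φ ε) μ.toJordanDecomposition.negPart := by
  ext x
  simp [mollifiedSigned, convDensity, dilateKernel]

lemma densityEnergy_convDensity_sub {ψ : EuclideanSpace ℝ (Fin d) → ℝ} (hψ : IsBoundedKernel ψ)
    (hloc : LocallyIntegrable (fun x => (W x).toReal) volume)
    {α β : Measure (EuclideanSpace ℝ (Fin d))} [IsFiniteMeasure α] [IsFiniteMeasure β]
    {K : Set (EuclideanSpace ℝ (Fin d))} (hK : IsCompact K)
    (hα : ∀ᵐ a ∂α, a ∈ K) (hβ : ∀ᵐ b ∂β, b ∈ K) :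
    densityEnergy W (convDensity ψ α - convDensity ψ β) = 2⁻¹ *
      (crossEnergy (fun x => (W x).toReal) volume (convDensity ψ α) (convDensity ψ α) -
        crossEnergy (fun x => (W x).toReal) volume (convDensity ψ α) (convDensity ψ β) -
        crossEnergy (fun x => (W x).toReal) volume (convDensity ψ β) (convDensity ψ α) +
        crossEnergy (fun x => (W x).toReal) volume (convDensity ψ β) (convDensity ψ β)) := by
  have hαα := integrable_comp_sub_mul_convDensity hψ hloc hK hα hα
  have hαβ := integrable_comp_sub_mul_convDensity hψ hloc hK hα hβ
  have hβα := integrable_comp_sub_mul_convDensity hψ hloc hK hβ hα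
  have hββ := integrable_comp_sub_mul_convDensity hψ hloc hK hβ hβ
  rw [densityEnergy]
  simp only [crossEnergy]
  rw [← integral_sub' hαα hαβ, ← integral_sub' (hαα.sub hαβ) hβα,
    ← integral_add' ((hαα.sub hαβ).sub hβα) hββ, Measure.volume_eq_prod]
  congr 2 with p
  simp only [Pi.add_apply, Pi.sub_apply]
  ring

lemma IsAdmissiblePotential.signedEnergy_eq (hW : IsAdmissiblePotential W volume)
    (μ : SignedMeasure (EuclideanSpace ℝ (Fin d))) :
    signedEnergy W μ = 2⁻¹ *
      (∫ q, (W (q.1 - q.2)).toReal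
          ∂(μ.toJordanDecomposition.posPart.prod μ.toJordanDecomposition.posPart) -
        ∫ q, (W (q.1 - q.2)).toReal
          ∂(μ.toJordanDecomposition.posPart.prod μ.toJordanDecomposition.negPart) -
        ∫ q, (W (q.1 - q.2)).toReal
          ∂(μ.toJordanDecomposition.negPart.prod μ.toJordanDecomposition.posPart) +
        ∫ q, (W (q.1 - q.2)).toReal
          ∂(μ.toJordanDecomposition.negPart.prod μ.toJordanDecomposition.negPart)) := by
  rw [signedEnergy, hW.integral_toReal_prod_comm (α := μ.toJordanDecomposition.posPart)
    (β := μ.toJordanDecomposition.negPart)]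
  ring

lemma IsAdmissiblePotential.integrable_and_ae_ne_top (hW : IsAdmissiblePotential W volume)
    {ρ : Measure (EuclideanSpace ℝ (Fin d))} [IsFiniteMeasure ρ]
    {K : Set (EuclideanSpace ℝ (Fin d))} (hK : IsCompact K) (hρ : ∀ᵐ a ∂ρ, a ∈ K)
    (hE : interactionEnergy W ρ < ⊤) :
    Integrable (fun q : EuclideanSpace ℝ (Fin d) × EuclideanSpace ℝ (Fin d) =>
      (W (q.1 - q.2)).toReal) (ρ.prod ρ) ∧ ∀ᵐ q ∂(ρ.prod ρ), W (q.1 - q.2) ≠ ⊤ := by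
  have hmeas : Measurable fun q : EuclideanSpace ℝ (Fin d) × EuclideanSpace ℝ (Fin d) =>
      W (q.1 - q.2) := hW.continuous.measurable.comp (by fun_prop)
  obtain ⟨m, hm⟩ := hW.bddBelow (K - K) (isCompact_sub hK hK)
  have hlower : ∀ᵐ q ∂(ρ.prod ρ), (m : EReal) ≤ W (q.1 - q.2) := by
    filter_upwards [Measure.quasiMeasurePreserving_fst.ae hρ,
      Measure.quasiMeasurePreserving_snd.ae hρ] with q h1 h2
    exact hm _ (sub_mem_sub h1 h2)
  have hneg := lintegral_toENNReal_neg_ne_top hlower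
  have hpos := lintegral_toENNReal_ne_top_of_interactionEnergy_lt_top hneg hE
  exact ⟨integrable_toReal_of_lintegral_toENNReal_ne_top hmeas hpos hneg,
    ae_ne_top_of_lintegral_toENNReal_ne_top hmeas hpos⟩

end SignedEnergy

theorem mollified_energy_tendsto_general {d : ℕ} {W : EuclideanSpace ℝ (Fin d) → EReal}
    (hW : IsAdmissiblePotential W volume) {φ : EuclideanSpace ℝ (Fin d) → ℝ}
    (hφ : IsBoundedKernel φ) (hφ1 : ∫ x, φ x = 1) (μ : SignedMeasure (EuclideanSpace ℝ (Fin d)))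
    (hμcpt : ∃ K : Set (EuclideanSpace ℝ (Fin d)), IsCompact K ∧ μ.totalVariation Kᶜ = 0)
    (hμE : interactionEnergy W μ.totalVariation < ⊤) :
    Tendsto (fun ε : ℝ => densityEnergy W (mollifiedSigned φ μ ε)) (𝓝[>] 0)
      (𝓝 (signedEnergy W μ)) := by
  obtain ⟨K, hK, hμK⟩ := hμcpt
  set P := μ.toJordanDecomposition.posPart
  set N := μ.toJordanDecomposition.negPart
  have hμPN : μ.totalVariation = P + N := rfl
  rw [hμPN] at hμK hμE
  have hPle : P ≤ P + N := Measure.le_add_right le_rfl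
  have hNle : N ≤ P + N := Measure.le_add_left le_rfl
  obtain ⟨hint, hfin⟩ := hW.integrable_and_ae_ne_top hK hμK hμE
  have hlim (α β : Measure _) [IsFiniteMeasure α] [IsFiniteMeasure β] (hα : α ≤ P + N)
      (hβ : β ≤ P + N) := hW.tendsto_crossEnergy_convDensity hφ hφ1 hK (ae_mono hα hμK)
    (ae_mono hβ hμK) (hint.mono_measure (Measure.prod_mono hα hβ))
    (ae_mono (Measure.prod_mono hα hβ) hfin)
  have hcombined := ((((hlim P P hPle hPle).sub (hlim P N hPle hNle)).sub
    (hlim N P hNle hPle)).add (hlim N N hNle hNle)).const_mul 2⁻¹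
  rw [hW.signedEnergy_eq μ]
  refine hcombined.congr' ?_
  filter_upwards [self_mem_nhdsWithin] with ε hε
  rw [mollifiedSigned_eq_sub_convDensity, densityEnergy_convDensity_sub
    (hφ.dilateKernel (ne_of_gt hε)) hW.locallyIntegrable hK (ae_mono hPle hμK) (ae_mono hNle hμK)]

/-- If `W` satisfies (W0-w) and (W1) and `μ` is a compactly supported signed measure
with `E[|μ|] < ∞`, then `E[μ * φ_ε] → E[μ]` as `ε → 0⁺`, for any mollifier `φ`. -/
theorem mollified_energy_tendsto
    {d : ℕ} (hd : 0 < d) (W : EuclideanSpace ℝ (Fin d) → EReal)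
    (heven : ∀ x, W (-x) = W x)
    (hlsc : LowerSemicontinuous W)
    (hloc : LocallyIntegrable (fun x => (W x).toReal) volume)
    (hbddcpt : ∀ K : Set (EuclideanSpace ℝ (Fin d)), IsCompact K →
      ∃ m : ℝ, ∀ x ∈ K, (m : EReal) ≤ W x)
    (hcont : ContinuousOn W {(0 : EuclideanSpace ℝ (Fin d))}ᶜ)
    (hW0 : Tendsto W (nhdsWithin 0 {(0 : EuclideanSpace ℝ (Fin d))}ᶜ) (nhds (W 0)))
    (hmoll : ∀ R : ℝ, 0 < R → ∃ C₁ C₂ : ℝ,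
      ∀ x : EuclideanSpace ℝ (Fin d), ‖x‖ < R → ∀ ε : ℝ, 0 < ε → ε < 1 →
        ((((volume (ball x ε)).toReal)⁻¹ *
            ∫ y in ball x ε, (W y).toReal : ℝ) : EReal) ≤ (C₁ : EReal) + (C₂ : EReal) * W x)
    (φ : EuclideanSpace ℝ (Fin d) → ℝ)
    (hφsmooth : ContDiff ℝ (⊤ : ℕ∞) φ) (hφpos : ∀ x, 0 ≤ φ x)
    (hφsupp : tsupport φ ⊆ closedBall (0 : EuclideanSpace ℝ (Fin d)) 1)
    (hφrad : ∀ x y : EuclideanSpace ℝ (Fin d), ‖x‖ ≤ ‖y‖ → φ y ≤ φ x)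
    (hφint : ∫ x, φ x = 1)
    (μ : SignedMeasure (EuclideanSpace ℝ (Fin d)))
    (hμcpt : ∃ K : Set (EuclideanSpace ℝ (Fin d)), IsCompact K ∧ μ.totalVariation Kᶜ = 0)
    (hμE : interactionEnergy W μ.totalVariation < ⊤) :
    Tendsto (fun ε : ℝ => densityEnergy W (mollifiedSigned φ μ ε))
      (nhdsWithin 0 (Ioi (0:ℝ))) (nhds (signedEnergy W μ)) := by
  have hW : IsAdmissiblePotential W volume :=
    ⟨heven, continuous_of_continuousOn_compl_singleton hcont hW0, hloc, hbddcpt, fun R hR => by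
      simpa only [setAverage_eq, measureReal_def, smul_eq_mul] using hmoll R hR⟩
  have hφ : IsBoundedKernel φ := .of_continuous hφsmooth.continuous <|
    (isCompact_closedBall 0 1).of_isClosed_subset (isClosed_tsupport φ) hφsupp
  exact mollified_energy_tendsto_general hW hφ hφint μ hμcpt hμE

end
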